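/- Let X be a metric space equipped with Carathéodory's construction from an admissible gauge ζ on the Borel sets, producing the measure ψ, and let λ be the doubling constant of ζ. For each n ∈ ℕ let μ_n be a Borel measure on X, let t ∈ [0,∞), and let r_n be a sequence of positive numbers decreasing to 0. Suppose A ⊂ { x ∈ X : liminf_{n→∞} ( sup_{0<ρ<r_n} μ_n(B_ρ(x))/ζ(B_ρ(x)) ) ≥ t }. Then for every open set Ω containing A, λ · liminf_{n→∞} μ_n(Ω) ≥ t · ψ(A). -/

import Mathlib

/-!
Disjoint balls on which `μ n` dominates the gauge of the five times larger balls give, by Vitali's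
covering theorem, `t * φ_{10 r n} (E) ≤ lam * μ n Ω`, but only on a set `E` whose points all have
such a ball at the same indices `n`. The set `A` is an increasing union of sets that are good in
this sense for all large `n`; they need not be measurable, but `ψ` is still continuous along the
union, because it is a Borel regular outer measure: covers by Borel sets have Borel unions.
-/

open MeasureTheory Metric Filter Set
open scoped ENNReal Topology

/-- The approximating measure `φ_δ` of Carathéodory's construction from the gauge `ζ`
and the family of all Borel subsets. -/
noncomputable def caraPre {X : Type*} [MetricSpace X] [MeasurableSpace X]
    (ζ : Set X → ℝ≥0∞) (δ : ℝ) (A : Set X) : ℝ≥0∞ :=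
  ⨅ (G : Set (Set X)) (_ : G.Countable) (_ : ∀ S ∈ G, MeasurableSet S)
    (_ : ∀ S ∈ G, EMetric.diam S ≤ ENNReal.ofReal δ) (_ : A ⊆ ⋃₀ G),
    ∑' S : G, ζ S.1

/-- The resulting measure `ψ = lim_{δ→0⁺} φ_δ = sup_{δ>0} φ_δ` of Carathéodory's
construction. -/
noncomputable def caraMeas {X : Type*} [MetricSpace X] [MeasurableSpace X]
    (ζ : Set X → ℝ≥0∞) (A : Set X) : ℝ≥0∞ :=
  ⨆ (δ : ℝ) (_ : 0 < δ), caraPre ζ δ A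

/-- The gauge `ζ` restricted to Borel sets and set to `∞` on all other sets, so that Mathlib's
metric outer measures, which allow covers by arbitrary sets, only see covers by Borel sets. -/
noncomputable def borelGauge {X : Type*} [MeasurableSpace X] (ζ : Set X → ℝ≥0∞) :
    Set X → ℝ≥0∞ :=
  extend fun S (_ : MeasurableSet S) => ζ S

theorem trim_mkMetric'_pre_borelGauge {X : Type*} [EMetricSpace X] [MeasurableSpace X]
    (ζ : Set X → ℝ≥0∞) (r : ℝ≥0∞) :
    (OuterMeasure.mkMetric'.pre (borelGauge ζ) r).trim =
      OuterMeasure.mkMetric'.pre (borelGauge ζ) r := by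
  refine le_antisymm (OuterMeasure.mkMetric'.le_pre.2 fun S hS => le_iInf fun hmeas => ?_)
    (OuterMeasure.le_trim _)
  rw [OuterMeasure.trim_eq _ hmeas]
  exact (OuterMeasure.mkMetric'.pre_le hS).trans (iInf_le _ hmeas)

theorem trim_mkMetric'_borelGauge {X : Type*} [EMetricSpace X] [MeasurableSpace X]
    (ζ : Set X → ℝ≥0∞) :
    (OuterMeasure.mkMetric' (borelGauge ζ)).trim = OuterMeasure.mkMetric' (borelGauge ζ) := by
  simp only [OuterMeasure.mkMetric'.eq_iSup_nat, OuterMeasure.trim_iSup,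
    trim_mkMetric'_pre_borelGauge]

section CaratheodoryConstruction

variable {X : Type*} [MetricSpace X] [MeasurableSpace X]

theorem caraPre_anti (ζ : Set X → ℝ≥0∞) {δ δ' : ℝ} (h : δ ≤ δ') (A : Set X) :
    caraPre ζ δ' A ≤ caraPre ζ δ A :=
  iInf_mono fun _ => iInf_mono fun _ => iInf_mono fun _ => le_iInf fun hdiam =>
    iInf_le _ fun S hS => (hdiam S hS).trans (ENNReal.ofReal_le_ofReal h)

theorem caraPre_le_tsum {ι : Type*} [Countable ι] (ζ : Set X → ℝ≥0∞) {δ : ℝ} {A : Set X}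
    {s : ι → Set X} (hmeas : ∀ i, MeasurableSet (s i))
    (hdiam : ∀ i, ediam (s i) ≤ ENNReal.ofReal δ) (hcover : A ⊆ ⋃ i, s i) :
    caraPre ζ δ A ≤ ∑' i, ζ (s i) :=
  calc caraPre ζ δ A ≤ ∑' S : range s, ζ S :=
        iInf_le_of_le (range s) <| iInf_le_of_le (countable_range s) <|
          iInf_le_of_le (forall_mem_range.2 hmeas) <| iInf_le_of_le (forall_mem_range.2 hdiam) <|
            iInf_le_of_le (by rwa [sUnion_range]) le_rfl
    _ ≤ ∑' i, ζ (s i) :=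
        ENNReal.tsum_le_tsum_comp_of_surjective rangeFactorization_surjective fun S => ζ S.1

theorem caraPre_eq_mkMetric'_pre (ζ : Set X → ℝ≥0∞) (δ : ℝ) (A : Set X) :
    caraPre ζ δ A = OuterMeasure.mkMetric'.pre (borelGauge ζ) (ENNReal.ofReal δ) A := by
  apply le_antisymm
  · rw [OuterMeasure.mkMetric'.pre, OuterMeasure.boundedBy_apply]
    refine le_iInf₂ fun s hcover => ?_
    set w : ℕ → ℝ≥0∞ := fun n => ⨆ _ : (s n).Nonempty,
      extend (fun S (_ : ediam S ≤ ENNReal.ofReal δ) => borelGauge ζ S) (s n) with hw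
    by_cases hfin : ∑' n, w n = ⊤
    · exact hfin ▸ le_top
    have hadm : ∀ n : {n // (s n).Nonempty},
        ediam (s n) ≤ ENNReal.ofReal δ ∧ MeasurableSet (s n) ∧ w n = ζ (s n) := by
      rintro ⟨n, hn⟩
      have hne := ENNReal.ne_top_of_tsum_ne_top hfin n
      by_cases hdiam : ediam (s n) ≤ ENNReal.ofReal δ <;> by_cases hmeas : MeasurableSet (s n) <;>
        simp_all [extend, borelGauge]
    calc caraPre ζ δ A ≤ ∑' n : {n // (s n).Nonempty}, ζ (s n) := by
          refine caraPre_le_tsum ζ (fun n => (hadm n).2.1) (fun n => (hadm n).1) fun x hx => ?_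
          obtain ⟨n, hn⟩ := mem_iUnion.1 (hcover hx)
          exact mem_iUnion.2 ⟨⟨n, x, hn⟩, hn⟩
      _ = ∑' n : {n // (s n).Nonempty}, w n := tsum_congr fun n => (hadm n).2.2.symm
      _ ≤ ∑' n, w n := ENNReal.tsum_comp_le_tsum_of_injective Subtype.val_injective w
  · refine le_iInf₂ fun G hG => le_iInf₂ fun hmeas hdiam => le_iInf fun hcover => ?_
    rw [sUnion_eq_biUnion] at hcover
    refine (measure_mono hcover).trans <| (measure_biUnion_le _ hG _).trans <|
      ENNReal.tsum_le_tsum fun S => ?_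
    exact (OuterMeasure.mkMetric'.pre_le (hdiam S S.2)).trans (iInf_le _ (hmeas S S.2))

theorem caraMeas_eq_outerMeasure_mkMetric' (ζ : Set X → ℝ≥0∞) (A : Set X) :
    caraMeas ζ A = OuterMeasure.mkMetric' (borelGauge ζ) A := by
  simp only [caraMeas, caraPre_eq_mkMetric'_pre, OuterMeasure.mkMetric', OuterMeasure.iSup_apply]
  apply le_antisymm
  · exact iSup₂_le fun δ hδ => le_iSup₂_of_le _ (ENNReal.ofReal_pos.2 hδ) le_rfl
  · refine iSup₂_le fun r hr => ?_
    obtain ⟨δ, hδ, hδr⟩ := ENNReal.lt_iff_exists_nnreal_btwn.1 hr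
    refine le_iSup₂_of_le (δ : ℝ) (by exact_mod_cast hδ) ?_
    rw [ENNReal.ofReal_coe_nnreal]
    exact OuterMeasure.mkMetric'.mono_pre _ hδr.le A

theorem caraMeas_eq_mkMetric' [BorelSpace X] (ζ : Set X → ℝ≥0∞) (A : Set X) :
    caraMeas ζ A = Measure.mkMetric' (borelGauge ζ) A := by
  rw [caraMeas_eq_outerMeasure_mkMetric', ← trim_mkMetric'_borelGauge, Measure.mkMetric',
    ← toMeasure_toOuterMeasure, Measure.coe_toOuterMeasure]

theorem caraMeas_iUnion_of_monotone [BorelSpace X] (ζ : Set X → ℝ≥0∞) {E : ℕ → Set X}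
    (hE : Monotone E) : caraMeas ζ (⋃ k, E k) = ⨆ k, caraMeas ζ (E k) := by
  simp only [caraMeas_eq_mkMetric', hE.measure_iUnion]

theorem mul_caraMeas_le_liminf {ι : Type*} {l : Filter ι} {ζ : Set X → ℝ≥0∞} {t : ℝ≥0∞}
    {A : Set X} {δ : ι → ℝ} {b : ι → ℝ≥0∞} (hδ : Tendsto δ l (𝓝 0))
    (hb : ∀ᶠ i in l, t * caraPre ζ (δ i) A ≤ b i) : t * caraMeas ζ A ≤ liminf b l := by
  simp only [caraMeas, ENNReal.mul_iSup]
  refine iSup₂_le fun ε hε => le_liminf_of_le (by isBoundedDefault) ?_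
  filter_upwards [hb, hδ.eventually_le_const hε] with i hi hδε
  exact (mul_le_mul_right (caraPre_anti ζ hδε A) t).trans hi

end CaratheodoryConstruction

theorem exists_countable_pairwiseDisjoint_closedBall_cover {X : Type*} [PseudoMetricSpace X]
    [MeasurableSpace X] [OpensMeasurableSpace X] {ν : Measure X} {E Ω : Set X} {ρ : X → ℝ} {R : ℝ}
    (hΩ : ν Ω ≠ ⊤) (hρ : ∀ x ∈ E, 0 ≤ ρ x) (hρR : ∀ x ∈ E, ρ x ≤ R)
    (hsub : ∀ x ∈ E, closedBall x (ρ x) ⊆ Ω) (hpos : ∀ x ∈ E, 0 < ν (closedBall x (ρ x))) :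
    ∃ u ⊆ E, u.Countable ∧ u.PairwiseDisjoint (fun x => closedBall x (ρ x)) ∧
      E ⊆ ⋃ x ∈ u, closedBall x (5 * ρ x) := by
  obtain ⟨u, huE, hdisj, hcover⟩ :=
    Vitali.exists_disjoint_subfamily_covering_enlargement_closedBall E id ρ R hρR 5 (by norm_num)
  refine ⟨u, huE, ?_, hdisj, fun x hx => ?_⟩
  · have hcount := Measure.countable_meas_pos_of_disjoint_of_meas_iUnion_ne_top ν
      (fun x : u => isClosed_closedBall.measurableSet) (hdisj.subtype _ _)
      (ne_top_of_le_ne_top hΩ (measure_mono (iUnion_subset fun x : u => hsub x (huE x.2))))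
    have hall : {x : u | 0 < ν (closedBall x.1 (ρ x))} = univ :=
      eq_univ_of_forall fun x => hpos x (huE x.2)
    exact countable_univ_iff.1 (hall ▸ hcount)
  · obtain ⟨y, hy, hxy⟩ := hcover x hx
    exact mem_biUnion hy (hxy (mem_closedBall_self (hρ x hx)))

section Density

variable {X : Type*} [MetricSpace X] [MeasurableSpace X]

/-- Some closed ball about `x` of radius at most `R` lies in `Ω`, has positive `ν`-measure, and its
`ν`-measure times `lam` dominates `t` times the gauge of the concentric ball of five times the
radius: these are the balls to which Vitali's covering theorem is applied. -/
def HasDominatingBall (ζ : Set X → ℝ≥0∞) (lam t : ℝ≥0∞) (ν : Measure X) (Ω : Set X) (R : ℝ)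
    (x : X) : Prop :=
  ∃ ρ, 0 < ρ ∧ ρ ≤ R ∧ closedBall x ρ ⊆ Ω ∧ 0 < ν (closedBall x ρ) ∧
    t * ζ (closedBall x (5 * ρ)) ≤ lam * ν (closedBall x ρ)

theorem mul_caraPre_le_of_hasDominatingBall [OpensMeasurableSpace X] {ζ : Set X → ℝ≥0∞}
    {lam t : ℝ≥0∞} {ν : Measure X} {E Ω : Set X} {R : ℝ} (hlam : lam ≠ 0)
    (hE : ∀ x ∈ E, HasDominatingBall ζ lam t ν Ω R x) :
    t * caraPre ζ (10 * R) E ≤ lam * ν Ω := by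
  by_cases hΩ : ν Ω = ⊤
  · simp [hΩ, ENNReal.mul_top hlam]
  choose! ρ hρ hρR hsub hpos hdom using hE
  obtain ⟨u, huE, hu, hdisj, hcover⟩ := exists_countable_pairwiseDisjoint_closedBall_cover hΩ
    (fun x hx => (hρ x hx).le) hρR hsub hpos
  have := hu.to_subtype
  have hdiam (x : u) : ediam (closedBall x.1 (5 * ρ x)) ≤ ENNReal.ofReal (10 * R) := by
    refine ediam_le_of_forall_dist_le fun y hy z hz => ?_
    linarith [dist_triangle_right y z x.1, mem_closedBall.1 hy, mem_closedBall.1 hz,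
      hρR x (huE x.2)]
  calc t * caraPre ζ (10 * R) E ≤ t * ∑' x : u, ζ (closedBall x (5 * ρ x)) := by
        gcongr
        exact caraPre_le_tsum ζ (fun _ => isClosed_closedBall.measurableSet) hdiam
          (by rwa [← biUnion_eq_iUnion u fun x _ => closedBall x (5 * ρ x)])
    _ ≤ lam * ∑' x : u, ν (closedBall x (ρ x)) := by
        simp only [← ENNReal.tsum_mul_left]
        exact ENNReal.tsum_le_tsum fun x => hdom x (huE x.2)
    _ = lam * ν (⋃ x ∈ u, closedBall x (ρ x)) := by
        rw [measure_biUnion hu hdisj fun _ _ => isClosed_closedBall.measurableSet]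
    _ ≤ lam * ν Ω := by
        gcongr
        exact iUnion₂_subset fun x hx => hsub x (huE hx)

theorem hasDominatingBall_of_lt_iSup_div {ζ : Set X → ℝ≥0∞} {lam t : ℝ≥0∞} {ν : Measure X}
    {Ω : Set X} {R : ℝ} {x : X} (hsub : closedBall x R ⊆ Ω)
    (hdbl : ∀ ρ, 0 < ρ → ρ < R → ζ (closedBall x (5 * ρ)) ≤ lam * ζ (closedBall x ρ))
    (ht : t < ⨆ (ρ : ℝ) (_ : 0 < ρ) (_ : ρ < R), ν (closedBall x ρ) / ζ (closedBall x ρ)) :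
    HasDominatingBall ζ lam t ν Ω R x := by
  simp only [lt_iSup_iff] at ht
  obtain ⟨ρ, hρ, hρR, htρ⟩ := ht
  refine ⟨ρ, hρ, hρR.le, (closedBall_subset_closedBall hρR.le).trans hsub, ?_, ?_⟩
  · exact (ENNReal.div_pos_iff.1 (bot_le.trans_lt htρ)).1.bot_lt
  · calc t * ζ (closedBall x (5 * ρ)) ≤ t * (lam * ζ (closedBall x ρ)) := by
          gcongr
          exact hdbl ρ hρ hρR
      _ = lam * (t * ζ (closedBall x ρ)) := mul_left_comm _ _ _
      _ ≤ lam * ν (closedBall x ρ) := by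
          gcongr
          exact ENNReal.mul_le_of_le_div htρ.le

theorem eventually_hasDominatingBall {ι : Type*} {l : Filter ι} {ζ : Set X → ℝ≥0∞}
    {γ lam t : ℝ≥0∞} {μ : ι → Measure X} {r : ι → ℝ} {Ω : Set X} {x : X} (hγ : 0 < γ)
    (hdbl : ∀ R : ℝ, 0 < R → ENNReal.ofReal R < γ →
      ζ (closedBall x (5 * R)) ≤ lam * ζ (closedBall x R))
    (hr : Tendsto r l (𝓝 0)) (hΩ : Ω ∈ 𝓝 x)
    (ht : t < liminf (fun i => ⨆ (ρ : ℝ) (_ : 0 < ρ) (_ : ρ < r i),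
      μ i (closedBall x ρ) / ζ (closedBall x ρ)) l) :
    ∀ᶠ i in l, HasDominatingBall ζ lam t (μ i) Ω (r i) x := by
  obtain ⟨ε, hε, hεΩ⟩ := nhds_basis_closedBall.mem_iff.1 hΩ
  have hγr : ∀ᶠ i in l, ENNReal.ofReal (r i) < γ :=
    (ENNReal.tendsto_ofReal hr).eventually_lt_const (by rwa [ENNReal.ofReal_zero])
  filter_upwards [hγr, hr.eventually_le_const hε, eventually_lt_of_lt_liminf ht] with i hγi hεi hti
  exact hasDominatingBall_of_lt_iSup_div ((closedBall_subset_closedBall hεi).trans hεΩ)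
    (fun ρ hρ hρi => hdbl ρ hρ ((ENNReal.ofReal_le_ofReal hρi.le).trans_lt hγi)) hti

end Density

theorem exists_monotone_iUnion_eq_of_forall_eventually {ι α : Type*} {l : Filter ι}
    [l.IsCountablyGenerated] {p : ι → α → Prop} {A : Set α} (h : ∀ x ∈ A, ∀ᶠ i in l, p i x) :
    ∃ E : ℕ → Set α, Monotone E ∧ ⋃ k, E k = A ∧ ∀ k, ∀ᶠ i in l, ∀ x ∈ E k, p i x := by
  obtain ⟨s, hs⟩ := l.exists_antitone_basis
  refine ⟨fun k => {x ∈ A | ∀ i ∈ s k, p i x}, fun k m hkm x hx => ?_, ?_, fun k => ?_⟩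
  · exact ⟨hx.1, fun i hi => hx.2 i (hs.antitone hkm hi)⟩
  · refine (iUnion_subset fun k => sep_subset _ _).antisymm fun x hx => ?_
    obtain ⟨k, -, hk⟩ := hs.eventually_iff.1 (h x hx)
    exact mem_iUnion.2 ⟨k, hx, fun i hi => hk hi⟩
  · filter_upwards [hs.mem k] with i hi x hx using hx.2 i hi

theorem statement4_general {X ι : Type*} [MetricSpace X] [MeasurableSpace X] [BorelSpace X]
    {ζ : Set X → ℝ≥0∞} {γ lam : ℝ≥0∞} (hγ : 0 < γ) (hlam : 0 < lam) (hlamtop : lam ≠ ⊤)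
    (hζdbl : ∀ (x : X) (R : ℝ), 0 < R → ENNReal.ofReal R < γ →
      ζ (closedBall x (5 * R)) ≤ lam * ζ (closedBall x R))
    {l : Filter ι} [l.IsCountablyGenerated] {μ : ι → Measure X} {t : ℝ≥0∞} {r : ι → ℝ}
    (hr : Tendsto r l (𝓝 0)) {A Ω : Set X}
    (hA : A ⊆ {x : X | t ≤ liminf (fun i =>
        ⨆ (ρ : ℝ) (_ : 0 < ρ) (_ : ρ < r i),
          μ i (closedBall x ρ) / ζ (closedBall x ρ)) l})
    (hΩ : IsOpen Ω) (hAΩ : A ⊆ Ω) :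
    t * caraMeas ζ A ≤ lam * liminf (fun i => μ i Ω) l := by
  refine ENNReal.mul_le_of_forall_lt fun s hst b hb => (mul_le_mul_right hb.le s).trans ?_
  have hball : ∀ x ∈ A, ∀ᶠ i in l, HasDominatingBall ζ lam s (μ i) Ω (r i) x := fun x hx =>
    eventually_hasDominatingBall hγ (hζdbl x) hr (hΩ.mem_nhds (hAΩ hx)) (hst.trans_le (hA hx))
  obtain ⟨E, hEmono, rfl, hE⟩ := exists_monotone_iUnion_eq_of_forall_eventually hball
  rw [caraMeas_iUnion_of_monotone ζ hEmono, ENNReal.mul_iSup,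
    ← ENNReal.liminf_const_mul_of_ne_zero_of_ne_top hlam.ne' hlamtop]
  refine iSup_le fun k => mul_caraMeas_le_liminf (δ := fun i => 10 * r i) ?_ ?_
  · simpa only [mul_zero] using hr.const_mul 10
  · filter_upwards [hE k] with i hi using mul_caraPre_le_of_hasDominatingBall hlam.ne' hi

/-- Density-type lemma for a sequence of Borel measures: if the generalized upper
densities at scale `r_n` are eventually at least `t` on `A`, then for every open
`Ω ⊇ A` one has `λ liminf μ_n(Ω) ≥ t ψ(A)`. -/
theorem statement4 {X : Type*} [MetricSpace X] [MeasurableSpace X] [BorelSpace X]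
    (ζ : Set X → ℝ≥0∞) (I γ lam : ℝ≥0∞) (hI : 0 < I) (hγ : 0 < γ)
    (hlam : 0 < lam) (hlamtop : lam ≠ ⊤)
    (hζfin : ∀ (x : X) (R : ℝ), 0 < R → ENNReal.ofReal R < I →
      0 < ζ (closedBall x R) ∧ ζ (closedBall x R) < ⊤)
    (hζdbl : ∀ (x : X) (R : ℝ), 0 < R → ENNReal.ofReal R < γ →
      ζ (closedBall x (5 * R)) ≤ lam * ζ (closedBall x R))
    (μ : ℕ → Measure X) (t : ℝ≥0∞) (httop : t ≠ ⊤)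
    (r : ℕ → ℝ) (hr : ∀ n, 0 < r n) (hrmono : Antitone r)
    (hrlim : Tendsto r atTop (𝓝 0))
    (A : Set X)
    (hA : A ⊆ {x : X | t ≤ liminf (fun n =>
        ⨆ (ρ : ℝ) (_ : 0 < ρ) (_ : ρ < r n),
          μ n (closedBall x ρ) / ζ (closedBall x ρ)) atTop})
    (Ω : Set X) (hΩ : IsOpen Ω) (hAΩ : A ⊆ Ω) :
    t * caraMeas ζ A ≤ lam * liminf (fun n => μ n Ω) atTop :=
  statement4_general hγ hlam hlamtop hζdbl hrlim hA hΩ hAΩ
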